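/- arXiv:1307.2767 — 9 statements merged into one kernel-verified Lean document; each statement's English description precedes it below -/
import Mathlib

section
/- For all positive integers k, m, n, the (k+m-1)-th power of the n-th Fibonacci number divides G(k,n,m); that is, F_n^{k+m-1} ∣ G(k,n,m). -/
/-- `G n m k` is the sequence from the paper: `G(1,n,m) = F_n^m`,
`G(k+1,n,m) = F_{n·G(k,n,m)}`. The value at `k = 0` is junk. -/
def G (n m : ℕ) : ℕ → ℕ
  | 0 => 1
  | 1 => Nat.fib n ^ m
  | (k+2) => Nat.fib (n * G n m (k+1))

/-!
Modulo `F_n ^ 2` the addition formula for Fibonacci numbers degenerates, and by induction on `r`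
it gives `F_{nr} ≡ r F_n F_{n+1}^{r-1}`. So if `r ∣ F_n`, passing from `F_n` to `F_{nr}` gains a
factor `r`. With `r = F_n`, iterating this yields `F_n ^ (j + 1) ∣ F_{n F_n^j}`, which raises the
exponent by one at each step of the sequence `G`.
-/

open Nat

section Fibonacci

-- `fib a * fib b` stands on the left to avoid both the index `a - 1` and a subtraction.
lemma fib_add_add_fib_mul_fib (a b : ℕ) :
    fib (a + b) + fib a * fib b = fib a * fib (b + 1) + fib (a + 1) * fib b := by
  cases b with
  | zero => simp
  | succ b => rw [← add_assoc, fib_add, fib_add_two]; ring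

variable (n r : ℕ)

lemma fib_sq_dvd_fib_mul_mul_fib : fib n ^ 2 ∣ fib (n * r) * fib n := by
  rw [sq]
  exact mul_dvd_mul_right (fib_dvd _ _ (dvd_mul_right n r)) _

lemma fib_mul_add_one_modEq : fib (n * r + 1) ≡ fib (n + 1) ^ r [MOD fib n ^ 2] := by
  induction r with
  | zero => rfl
  | succ r ih =>
    calc fib (n * (r + 1) + 1)
        = fib (n * r) * fib n + fib (n * r + 1) * fib (n + 1) := by rw [mul_add_one, fib_add]
      _ ≡ 0 + fib (n + 1) ^ r * fib (n + 1) [MOD fib n ^ 2] :=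
        (modEq_zero_iff_dvd.2 (fib_sq_dvd_fib_mul_mul_fib n r)).add (ih.mul_right _)
      _ = fib (n + 1) ^ (r + 1) := by rw [zero_add, pow_succ]

lemma fib_mul_succ_modEq :
    fib (n * (r + 1)) ≡ (r + 1) * fib n * fib (n + 1) ^ r [MOD fib n ^ 2] := by
  induction r with
  | zero => simp [Nat.ModEq.refl]
  | succ r ih =>
    have cross_term : fib (n * (r + 1)) * fib n ≡ 0 [MOD fib n ^ 2] :=
      modEq_zero_iff_dvd.2 (fib_sq_dvd_fib_mul_mul_fib n (r + 1))
    calc fib (n * (r + 1 + 1))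
        ≡ fib (n * (r + 1) + n) + fib (n * (r + 1)) * fib n [MOD fib n ^ 2] :=
        (cross_term.add_left _).symm
      _ = fib (n * (r + 1)) * fib (n + 1) + fib (n * (r + 1) + 1) * fib n :=
        fib_add_add_fib_mul_fib _ _
      _ ≡ (r + 1) * fib n * fib (n + 1) ^ r * fib (n + 1) + fib (n + 1) ^ (r + 1) * fib n
          [MOD fib n ^ 2] :=
        (ih.mul_right _).add ((fib_mul_add_one_modEq n (r + 1)).mul_right _)
      _ = (r + 1 + 1) * fib n * fib (n + 1) ^ (r + 1) := by ring

variable {n r}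

lemma fib_mul_dvd_fib_mul (h : r ∣ fib n) : fib n * r ∣ fib (n * r) := by
  cases r with
  | zero => simp
  | succ r =>
    have dvd_sq : fib n * (r + 1) ∣ fib n ^ 2 := by
      rw [sq]
      exact mul_dvd_mul_left _ h
    rw [(fib_mul_succ_modEq n r).dvd_iff dvd_sq, mul_comm (fib n)]
    exact dvd_mul_right _ _

lemma fib_mul_pow_dvd_fib_mul_pow (h : r ∣ fib n) (j : ℕ) :
    fib n * r ^ j ∣ fib (n * r ^ j) := by
  induction j with
  | zero => simp
  | succ j ih =>
    have r_dvd : r ∣ fib (n * r ^ j) := h.trans (fib_dvd _ _ (dvd_mul_right _ _))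
    rw [pow_succ, ← mul_assoc, ← mul_assoc]
    exact (mul_dvd_mul_right ih r).trans (fib_mul_dvd_fib_mul r_dvd)

lemma fib_pow_succ_dvd_fib_mul_fib_pow (n j : ℕ) : fib n ^ (j + 1) ∣ fib (n * fib n ^ j) := by
  rw [pow_succ']
  exact fib_mul_pow_dvd_fib_mul_pow dvd_rfl j

end Fibonacci

theorem stmt_0 (k m n : ℕ) (hk : 1 ≤ k) (hm : 1 ≤ m) (hn : 1 ≤ n) :
    Nat.fib n ^ (k + m - 1) ∣ G n m k := by
  induction k, hk using Nat.le_induction with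
  | base => rw [Nat.add_sub_cancel_left, G]
  | succ k hk ih =>
    obtain ⟨k, rfl⟩ := Nat.exists_eq_add_of_le' hk
    rw [G, show k + 1 + 1 + m - 1 = k + 1 + m - 1 + 1 by lia]
    exact (fib_pow_succ_dvd_fib_mul_fib_pow n _).trans (fib_dvd _ _ (mul_dvd_mul_left n ih))
end

section
/- Let k ≥ 2, n ≥ 3, and m ≥ 1 be integers with k even and n not divisible by 3. Then G(k,n,m)/F_n^{k+m-1} ≡ 1 (mod F_n). -/
/-!
Write `u = F_n`. Expanding Binet's `φ ^ (n * N) = (F_{n+1} - ψ * u) ^ N` shows that, for `u` odd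
and `u ^ r ∣ N`, the first term dominates: `F_{n N} ≡ N * u * F_{n+1} ^ (N - 1)` modulo
`u ^ (r + 2)`. Hence the quotients `q_k = G(k,n,m) / u ^ (k+m-1)` satisfy
`q_{k+1} ≡ q_k * F_{n+1} ^ (G(k,n,m) - 1)` modulo `u`. By Cassini's identity
`F_{n+1} ^ 2 ≡ (-1) ^ n`, so only `G(k,n,m)` modulo `4` matters.

If `4 ∤ n`, no `G(k,n,m)` is divisible by `2` or `3`; if moreover `n` is odd, each is `1` mod `4`,
since `F_{2k+1}` is a sum of two squares. Hence every factor is `1`. If `4 ∣ n`, then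
`F_{n+1} ^ 2 ≡ 1` and the first factor is `1`; since `3 = F_4` divides every `G(k,n,m)`, all terms
after `G(1,n,m)` are even, so the later factors are `F_{n+1}` and cancel in pairs.
-/

open Finset
open Nat (fib)

section Fibonacci

variable {n N r : ℕ}

theorem fib_dvd_fib_iff {m : ℕ} (hm : 3 ≤ m) : fib m ∣ fib n ↔ m ∣ n := by
  refine ⟨fun h ↦ ?_, Nat.fib_dvd m n⟩
  have fib_gcd_eq : fib (Nat.gcd m n) = fib m := by rw [Nat.fib_gcd, Nat.gcd_eq_left h]
  have le_gcd : m ≤ Nat.gcd m n := by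
    by_contra! hlt
    have fib_lt : fib (m - 1) < fib m := (Nat.fib_lt_fib (by lia)).2 (by lia)
    have fib_gcd_le : fib (Nat.gcd m n) ≤ fib (m - 1) := Nat.fib_mono (by lia)
    lia
  exact Nat.gcd_eq_left_iff_dvd.1 (le_antisymm (Nat.gcd_le_left n (by lia)) le_gcd)

theorem even_fib_iff : Even (fib n) ↔ 3 ∣ n :=
  even_iff_two_dvd.trans (fib_dvd_fib_iff le_rfl)

theorem odd_fib_iff : Odd (fib n) ↔ ¬ 3 ∣ n := by
  rw [← Nat.not_even_iff_odd, even_fib_iff]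

theorem three_dvd_fib_iff : 3 ∣ fib n ↔ 4 ∣ n :=
  fib_dvd_fib_iff (m := 4) (by norm_num)

theorem fib_modEq_one_mod_four (hn : Odd n) (hfib : Odd (fib n)) : fib n ≡ 1 [MOD 4] := by
  obtain ⟨k, rfl⟩ := hn
  rw [Nat.fib_two_mul_add_one] at hfib ⊢
  have sq_mod_four (x : ℕ) : x ^ 2 % 4 = 0 ∨ x ^ 2 % 4 = 1 := by
    rcases Nat.even_or_odd' x with ⟨c, rfl | rfl⟩ <;> ring_nf <;> lia
  have sq_succ := sq_mod_four (fib (k + 1))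
  have sq := sq_mod_four (fib k)
  rw [Nat.odd_iff] at hfib
  rw [Nat.ModEq]
  lia

theorem fib_succ_sq_modEq (n : ℕ) : (fib (n + 1) : ℤ) ^ 2 ≡ (-1) ^ n [ZMOD fib n] := by
  have cassini : (fib (n + 2) : ℤ) * fib n - fib (n + 1) ^ 2 = (-1) ^ (n + 1) := by
    simpa [add_assoc, ← Int.fib_natCast, show (n + 1 : ℤ).natAbs = n + 1 by lia]
      using Int.fib_succ_mul_fib_pred_sub_fib_sq (n + 1)
  exact Int.modEq_iff_dvd.2 ⟨-fib (n + 2), by linear_combination cassini⟩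

theorem fib_succ_pow_modEq_one {s : ℕ} (h : Even (n * s)) :
    fib (n + 1) ^ (2 * s) ≡ 1 [MOD fib n] := by
  rw [← Int.natCast_modEq_iff]
  simpa [pow_mul, ← pow_mul (-1 : ℤ), h.neg_one_pow] using (fib_succ_sq_modEq n).pow s

theorem fib_mul_eq_sum (n N : ℕ) :
    (fib (n * N) : ℤ) =
      -∑ j ∈ range (N + 1), (-fib n : ℤ) ^ j * fib (n + 1) ^ (N - j) * N.choose j * fib j := by
  have pow_mul_eq_sum {x y : ℝ} (h : fib (n + 1) - x * fib n = y ^ n) :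
      y ^ (n * N) =
        ∑ j ∈ range (N + 1), (-fib n : ℝ) ^ j * fib (n + 1) ^ (N - j) * N.choose j * x ^ j := by
    rw [pow_mul, ← h, sub_eq_neg_add, add_pow]
    exact sum_congr rfl fun j _ ↦ by rw [mul_comm x, ← neg_mul, mul_pow]; ring
  have hφ := pow_mul_eq_sum (Real.fib_succ_sub_goldenConj_mul_fib n)
  have hψ := pow_mul_eq_sum (Real.fib_succ_sub_goldenRatio_mul_fib n)
  suffices h : (fib (n * N) : ℝ) =
      -∑ j ∈ range (N + 1), (-fib n : ℝ) ^ j * fib (n + 1) ^ (N - j) * N.choose j * fib j by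
    exact_mod_cast h
  rw [Real.coe_fib_eq (n * N), hφ, hψ, ← sum_sub_distrib, sum_div, ← sum_neg_distrib]
  refine sum_congr rfl fun j _ ↦ ?_
  rw [Real.coe_fib_eq j]
  ring

theorem gcd_pow_add_two_dvd_pow {u : ℕ} (hu : Odd u) (r j : ℕ) :
    Nat.gcd (u ^ r) (j + 2) ∣ u ^ j := by
  refine (Nat.dvd_iff_prime_pow_dvd_dvd _ _).2 fun p v hp hpv ↦ ?_
  rcases eq_or_ne v 0 with rfl | hv
  · simp
  have p_dvd : p ∣ u :=
    hp.dvd_of_dvd_pow ((dvd_pow_self p hv).trans (hpv.trans (Nat.gcd_dvd_left _ _)))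
  have three_le : 3 ≤ p := by
    obtain ⟨c, hc⟩ := hu.of_dvd_nat p_dvd
    have := hp.two_le
    lia
  have v_le : v ≤ j := by
    have bernoulli : 1 + v * 2 ≤ 3 ^ v := one_add_le_pow_of_two_add_nonneg (Nat.zero_le _) v
    have := calc v + 2 ≤ 3 ^ v := by lia
      _ ≤ p ^ v := Nat.pow_le_pow_left three_le v
      _ ≤ j + 2 := Nat.le_of_dvd (by lia) (hpv.trans (Nat.gcd_dvd_right _ _))
    lia
  exact (pow_dvd_pow p v_le).trans (pow_dvd_pow_of_dvd p_dvd j)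

theorem pow_dvd_pow_mul_choose {u : ℕ} (hu : Odd u) (h : u ^ r ∣ N) (j : ℕ) :
    u ^ (r + 2) ∣ u ^ (j + 2) * N.choose (j + 2) := by
  rcases N with _ | M
  · simp
  have dvd_mul_choose : u ^ r ∣ (j + 2) * (M + 1).choose (j + 2) := by
    rw [mul_comm, ← Nat.add_one_mul_choose_eq]
    exact h.mul_right _
  have dvd_pow_mul_choose : u ^ r ∣ u ^ j * (M + 1).choose (j + 2) :=
    (Nat.dvd_gcd_mul_iff_dvd_mul.2 dvd_mul_choose).trans
      (Nat.mul_dvd_mul_right (gcd_pow_add_two_dvd_pow hu r j) _)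
  rw [pow_add, pow_add, mul_right_comm]
  exact Nat.mul_dvd_mul_right dvd_pow_mul_choose _

theorem fib_mul_modEq (hu : Odd (fib n)) (h : fib n ^ r ∣ N) :
    fib (n * N) ≡ N * fib n * fib (n + 1) ^ (N - 1) [MOD fib n ^ (r + 2)] := by
  rcases N with _ | M
  · simp [Nat.ModEq]
  rw [← Int.natCast_modEq_iff, fib_mul_eq_sum, sum_range_succ', sum_range_succ']
  have tail_dvd : ((fib n ^ (r + 2) : ℕ) : ℤ) ∣ ∑ j ∈ range M, (-fib n : ℤ) ^ (j + 1 + 1) *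
      fib (n + 1) ^ (M + 1 - (j + 1 + 1)) * (M + 1).choose (j + 1 + 1) * fib (j + 1 + 1) := by
    refine dvd_sum fun j _ ↦ ?_
    have term_dvd := Int.natCast_dvd_natCast.2 (pow_dvd_pow_mul_choose hu h j)
    convert term_dvd.mul_right ((-1) ^ j * fib (n + 1) ^ (M - (j + 1)) * fib (j + 2)) using 1
    rw [neg_pow, Nat.add_sub_add_right]
    push_cast
    ring
  rw [Int.modEq_iff_dvd]
  convert tail_dvd using 1
  push_cast [Nat.choose_one_right, Nat.fib_zero, Nat.fib_one, Nat.add_sub_cancel]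
  ring

theorem fib_mul_modEq_pow_succ_mul {q : ℕ} (hu : Odd (fib n)) (hN : N = fib n ^ r * q) :
    fib (n * N) ≡ fib n ^ (r + 1) * (q * fib (n + 1) ^ (N - 1))
      [MOD fib n ^ (r + 1) * fib n] := by
  have coeff_eq : fib n ^ (r + 1) * q = N * fib n := by rw [hN]; ring
  rw [← mul_assoc, coeff_eq, ← pow_succ]
  exact fib_mul_modEq hu (Dvd.intro q hN.symm)

theorem pow_succ_dvd_fib_mul (hu : Odd (fib n)) (h : fib n ^ r ∣ N) :
    fib n ^ (r + 1) ∣ fib (n * N) := by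
  obtain ⟨q, hq⟩ := h
  exact ((fib_mul_modEq_pow_succ_mul hu hq).dvd_iff (dvd_mul_right _ _)).2 (dvd_mul_right _ _)

theorem fib_mul_div_pow_modEq (hu : Odd (fib n)) (h : fib n ^ r ∣ N) :
    fib (n * N) / fib n ^ (r + 1) ≡ N / fib n ^ r * fib (n + 1) ^ (N - 1) [MOD fib n] := by
  have u_pos : 0 < fib n := hu.pos
  obtain ⟨g, hg⟩ := pow_succ_dvd_fib_mul hu h
  obtain ⟨q, hq⟩ := h
  have hmod := fib_mul_modEq_pow_succ_mul hu hq
  rw [hg] at hmod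
  rw [hg, Nat.mul_div_cancel_left _ (by positivity), Nat.div_eq_of_eq_mul_right (by positivity) hq]
  exact hmod.mul_left_cancel' (by positivity)

end Fibonacci

/-- The quotient `G(k+1,n,m) / F_n^(k+m)`; the index is shifted by one from the paper's so that
no truncated subtraction occurs in the exponent. -/
def quotG (n m k : ℕ) : ℕ := G n m (k + 1) / fib n ^ (k + m)

section Quotients

variable {n m : ℕ}

theorem G_pos (hn : 0 < n) (k : ℕ) : 0 < G n m (k + 1) := by
  induction k with
  | zero => exact pow_pos (Nat.fib_pos.2 hn) m
  | succ k ih => exact Nat.fib_pos.2 (mul_pos hn ih)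

theorem pow_dvd_G (hu : Odd (fib n)) (k : ℕ) : fib n ^ (k + m) ∣ G n m (k + 1) := by
  induction k with
  | zero => simp [G]
  | succ k ih =>
    rw [add_right_comm]
    exact pow_succ_dvd_fib_mul hu ih

theorem quotG_zero (hn : 0 < n) : quotG n m 0 = 1 := by
  simp [quotG, G, Nat.div_self (pow_pos (Nat.fib_pos.2 hn) m)]

theorem quotG_succ_modEq (hu : Odd (fib n)) (k : ℕ) :
    quotG n m (k + 1) ≡ quotG n m k * fib (n + 1) ^ (G n m (k + 1) - 1) [MOD fib n] := by
  rw [quotG, add_right_comm k 1 m]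
  exact fib_mul_div_pow_modEq hu (pow_dvd_G hu k)

theorem odd_G_and_not_three_dvd_G (h3 : ¬ 3 ∣ n) (h4 : ¬ 4 ∣ n) (k : ℕ) :
    Odd (G n m (k + 1)) ∧ ¬ 3 ∣ G n m (k + 1) := by
  induction k with
  | zero =>
    exact ⟨(odd_fib_iff.2 h3).pow,
      fun h ↦ h4 (three_dvd_fib_iff.1 (Nat.prime_three.dvd_of_dvd_pow h))⟩
  | succ k ih =>
    obtain ⟨odd_G, not_three_dvd_G⟩ := ih
    have coprime_four : Nat.Coprime 4 (G n m (k + 1)) := (odd_G.coprime_two_left).pow_left 2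
    exact ⟨odd_fib_iff.2 (Nat.prime_three.not_dvd_mul h3 not_three_dvd_G),
      fun h ↦ h4 (coprime_four.dvd_of_dvd_mul_right (three_dvd_fib_iff.1 h))⟩

theorem G_modEq_one_mod_four (hn : Odd n) (h3 : ¬ 3 ∣ n) (k : ℕ) : G n m (k + 1) ≡ 1 [MOD 4] := by
  have h4 : ¬ 4 ∣ n := fun h ↦ Nat.not_even_iff_odd.2 hn (even_iff_two_dvd.2 (by lia))
  have odd_G (k : ℕ) : Odd (G n m (k + 1)) := (odd_G_and_not_three_dvd_G h3 h4 k).1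
  cases k with
  | zero => simpa [G] using (fib_modEq_one_mod_four hn (odd_fib_iff.2 h3)).pow m
  | succ k => exact fib_modEq_one_mod_four (hn.mul (odd_G k)) (odd_G (k + 1))

theorem quotG_modEq_one_of_not_four_dvd (h3 : ¬ 3 ∣ n) (h4 : ¬ 4 ∣ n) (k : ℕ) :
    quotG n m k ≡ 1 [MOD fib n] := by
  induction k with
  | zero => rw [quotG_zero (by lia)]
  | succ k ih =>
    obtain ⟨s, hs⟩ := (odd_G_and_not_three_dvd_G (m := m) h3 h4 k).1
    have even_exponent : Even (n * s) := by
      rcases Nat.even_or_odd n with hn | hn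
      · exact hn.mul_right s
      · have : (2 * s + 1) % 4 = 1 := hs ▸ G_modEq_one_mod_four hn h3 k
        exact Even.mul_left (Nat.even_iff.2 (by lia)) n
    have hrec := quotG_succ_modEq (m := m) (odd_fib_iff.2 h3) k
    rw [hs, Nat.add_sub_cancel] at hrec
    exact hrec.trans (ih.mul (fib_succ_pow_modEq_one even_exponent))

theorem three_dvd_G (hm : 1 ≤ m) (h4 : 4 ∣ n) (k : ℕ) : 3 ∣ G n m (k + 1) := by
  cases k with
  | zero => exact dvd_pow (three_dvd_fib_iff.2 h4) (by lia)
  | succ k => exact three_dvd_fib_iff.2 (h4.mul_right _)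

theorem even_G (hm : 1 ≤ m) (h4 : 4 ∣ n) (k : ℕ) : Even (G n m (k + 2)) :=
  even_fib_iff.2 ((three_dvd_G hm h4 k).mul_left n)

theorem quotG_modEq_one_of_four_dvd (hm : 1 ≤ m) (h3 : ¬ 3 ∣ n) (h4 : 4 ∣ n) (i : ℕ) :
    quotG n m (2 * i + 1) ≡ 1 [MOD fib n] := by
  have hn : Even n := even_iff_two_dvd.2 (by lia)
  have hu : Odd (fib n) := odd_fib_iff.2 h3
  have hrec := quotG_succ_modEq (m := m) hu
  have pow_modEq_one {e : ℕ} (he : Even e) : fib (n + 1) ^ e ≡ 1 [MOD fib n] := by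
    obtain ⟨s, rfl⟩ := he.exists_two_nsmul
    exact fib_succ_pow_modEq_one (hn.mul_right s)
  induction i with
  | zero =>
    have odd_G_one : Odd (G n m 1) := hu.pow
    simpa [quotG_zero (m := m) (show 0 < n by lia)] using
      (hrec 0).trans ((pow_modEq_one (odd_G_one.tsub_odd odd_one)).mul_left _)
  | succ i ih =>
    set a := G n m (2 * i + 2)
    set b := G n m (2 * i + 3)
    have even_exponent : Even (a - 1 + (b - 1)) :=
      (Nat.Even.sub_odd (G_pos (by lia) _) (even_G hm h4 (2 * i)) odd_one).add_odd
        (Nat.Even.sub_odd (G_pos (by lia) _) (even_G hm h4 (2 * i + 1)) odd_one)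
    calc quotG n m (2 * i + 3)
        ≡ quotG n m (2 * i + 2) * fib (n + 1) ^ (b - 1) [MOD fib n] := hrec (2 * i + 2)
      _ ≡ quotG n m (2 * i + 1) * fib (n + 1) ^ (a - 1) * fib (n + 1) ^ (b - 1) [MOD fib n] :=
        (hrec (2 * i + 1)).mul_right _
      _ = quotG n m (2 * i + 1) * fib (n + 1) ^ (a - 1 + (b - 1)) := by rw [mul_assoc, pow_add]
      _ ≡ 1 [MOD fib n] := ih.mul (pow_modEq_one even_exponent)

end Quotients

theorem stmt_1_general (k n m : ℕ) (hk : 1 ≤ k) (hm : 1 ≤ m) (h3 : ¬ 3 ∣ n)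
    (hke : 4 ∣ n → Even k) :
    G n m k / fib n ^ (k + m - 1) ≡ 1 [MOD fib n] := by
  obtain ⟨j, rfl⟩ := Nat.exists_eq_add_of_le' hk
  rw [Nat.add_right_comm, Nat.add_sub_cancel]
  change quotG n m j ≡ 1 [MOD fib n]
  by_cases h4 : 4 ∣ n
  · obtain ⟨i, rfl⟩ : Odd j := Nat.even_add_one.1 (hke h4) |> Nat.not_even_iff_odd.1
    exact quotG_modEq_one_of_four_dvd hm h3 h4 i
  · exact quotG_modEq_one_of_not_four_dvd h3 h4 j

theorem stmt_1 (k n m : ℕ) (hk : 2 ≤ k) (hn : 3 ≤ n) (hm : 1 ≤ m)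
    (hke : Even k) (h3 : ¬ (3 ∣ n)) :
    G n m k / Nat.fib n ^ (k + m - 1) ≡ 1 [MOD Nat.fib n] :=
  stmt_1_general k n m (by lia) hm h3 fun _ ↦ hke
end

section
/- Let k ≥ 2, n ≥ 3, and m ≥ 1 be integers with 3 ∣ n, and assume either (k is even and m ≥ 2) or (k is odd and m = 1). Then G(k,n,m)/F_n^{k+m-1} ≡ (-1)^n · (F_{n-3}/2)^{k-1} (mod F_n), as a congruence of integers. (Note that 3 ∣ n implies 3 ∣ (n-3), hence F_{n-3} is even, so F_{n-3}/2 is an integer.) -/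
/-!
Put `F = F_n` and `s = (-1)^n`. Expanding `φ^(nN) = (F φ + F_{n-1})^N` for the golden ratio `φ`,
and likewise for its conjugate, gives `F_{nN} = ∑ j, F^j F_{n-1}^(N-j) C(N,j) F_j`. If `F^a ∣ N`,
the terms with `3 ≤ j` vanish modulo `F^(a+2)`, because `N ∣ j C(N,j)` and `j < 2^(j-1)`. If
moreover `F` and `N` are even, the terms `j = 1, 2` combine to `F N (F_{n-1}^(N-1) + F/2)`.
Cassini's identity gives `F_{n-1}^2 ≡ s` modulo `F`, and `F_{n-1} - F/2 = F_{n-3}/2`, so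
`F_{nN} ≡ F N s^(N/2-1) F_{n-3}/2` modulo `F^(a+2)`.

When `4 ∣ N`, passing from `N` to `F_{nN}` thus contributes a factor `F s F_{n-3}/2`. For `m = 1`
the first step has `N = F` and contributes `F F_{n-3}/2` instead: if `n` is odd then
`F_{n-1}^2 ≡ -1` modulo `F` excludes `4 ∣ F`, so `s^(F/2-1) = 1` for either parity of `n`.
-/

open Nat (fib)

section Divisibility

variable {d e F a N j : ℕ}

lemma dvd_pow_of_dvd_pow_of_lt_two_pow (hd₀ : d ≠ 0) (hd : d ∣ F ^ a) (hlt : d < 2 ^ (e + 1)) :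
    d ∣ F ^ e := by
  rw [Nat.dvd_iff_prime_pow_dvd_dvd]
  intro p i hp hpd
  rcases eq_or_ne i 0 with rfl | hi
  · simp
  have hpF : p ∣ F := hp.dvd_of_dvd_pow ((dvd_pow_self p hi).trans (hpd.trans hd))
  have hie : 2 ^ i < 2 ^ (e + 1) := calc
    2 ^ i ≤ p ^ i := Nat.pow_le_pow_left hp.two_le i
    _ ≤ d := Nat.le_of_dvd (Nat.pos_of_ne_zero hd₀) hpd
    _ < 2 ^ (e + 1) := hlt
  have hi_le : i ≤ e := Nat.lt_succ_iff.mp ((Nat.pow_lt_pow_iff_right one_lt_two).mp hie)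
  exact (pow_dvd_pow_of_dvd hpF i).trans (pow_dvd_pow F hi_le)

lemma dvd_mul_choose (N j : ℕ) : N ∣ j * N.choose j := by
  rcases j with _ | i
  · simp
  rcases N with _ | M
  · simp
  · exact ⟨M.choose i, by rw [mul_comm, Nat.add_one_mul_choose_eq]⟩

lemma pow_dvd_pow_mul_choose_s5 (hN : F ^ a ∣ N) (hj : j ≠ 0) (hlt : j < 2 ^ (e + 1)) :
    F ^ a ∣ F ^ e * N.choose j := by
  have hgcd : Nat.gcd (F ^ a) j ∣ F ^ e :=
    dvd_pow_of_dvd_pow_of_lt_two_pow (Nat.gcd_ne_zero_right hj) (Nat.gcd_dvd_left _ _)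
      ((Nat.gcd_le_right _ (Nat.pos_of_ne_zero hj)).trans_lt hlt)
  have hmul : F ^ a ∣ Nat.gcd (F ^ a) j * N.choose j :=
    dvd_gcd_mul_iff_dvd_mul.mpr (hN.trans (dvd_mul_choose N j))
  exact hmul.trans (Nat.mul_dvd_mul_right hgcd _)

lemma pow_add_two_dvd_pow_mul_choose (hN : F ^ a ∣ N) (hj : 3 ≤ j) :
    F ^ (a + 2) ∣ F ^ j * N.choose j := by
  obtain ⟨i, rfl⟩ := Nat.exists_eq_add_of_le' hj
  have hlt : i + 3 < 2 ^ (i + 2) := by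
    have := Nat.lt_two_pow_self (n := i)
    rw [pow_add]
    omega
  have := Nat.mul_dvd_mul_right (pow_dvd_pow_mul_choose_s5 hN (by omega) hlt) (F ^ 2)
  convert this using 1 <;> ring

end Divisibility

section ModEq

lemma neg_one_pow_mul_modEq_self (h : ℤ) (i : ℕ) : (-1) ^ i * h ≡ h [ZMOD 2 * h] := by
  rw [Int.modEq_iff_dvd]
  rcases neg_one_pow_eq_or ℤ i with hi | hi
  · simp [hi]
  · exact ⟨1, by rw [hi]; ring⟩

lemma natCast_div_modEq_of_modEq_mul {x q : ℕ} {c F : ℤ} (hq : q ≠ 0)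
    (h : (x : ℤ) ≡ q * c [ZMOD q * F]) :
    ((x / q : ℕ) : ℤ) ≡ c [ZMOD F] := by
  have hdvd : (q : ℤ) ∣ x := (h.of_mul_right _).dvd_iff.mpr (dvd_mul_right _ _)
  obtain ⟨y, rfl⟩ := Int.natCast_dvd_natCast.mp hdvd
  rw [Nat.mul_div_cancel_left _ (Nat.pos_of_ne_zero hq)]
  exact Int.ModEq.mul_left_cancel' (Int.natCast_ne_zero.mpr hq) (by exact_mod_cast h)

end ModEq

section FibMul

variable {n N a : ℕ}

lemma fib_succ_mul_eq_sum (n N : ℕ) :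
    fib ((n + 1) * N) =
      ∑ j ∈ Finset.range (N + 1), fib (n + 1) ^ j * fib n ^ (N - j) * N.choose j * fib j := by
  have hcast : (fib ((n + 1) * N) : ℝ) =
      ∑ j ∈ Finset.range (N + 1),
        (fib (n + 1) : ℝ) ^ j * (fib n : ℝ) ^ (N - j) * N.choose j * fib j := by
    rw [Real.coe_fib_eq, pow_mul, pow_mul, ← Real.goldenRatio_mul_fib_succ_add_fib,
      ← Real.goldenConj_mul_fib_succ_add_fib, add_pow, add_pow, ← Finset.sum_sub_distrib,
      Finset.sum_div]
    refine Finset.sum_congr rfl fun j _ => ?_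
    rw [Real.coe_fib_eq j, mul_pow, mul_pow]
    ring
  exact_mod_cast hcast

lemma fib_succ_mul_modEq (hN : fib (n + 1) ^ a ∣ N) :
    fib ((n + 1) * N) ≡
      fib (n + 1) * fib n ^ (N - 1) * N + fib (n + 1) ^ 2 * fib n ^ (N - 2) * N.choose 2
        [MOD fib (n + 1) ^ (a + 2)] := by
  let summand (j : ℕ) := fib (n + 1) ^ j * fib n ^ (N - j) * N.choose j * fib j
  have hsum : fib ((n + 1) * N) = ∑ j ∈ Finset.range (N + 3), summand j := by
    rw [fib_succ_mul_eq_sum, Finset.sum_range_succ _ (N + 2), Finset.sum_range_succ _ (N + 1)]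
    simp [summand, Nat.choose_eq_zero_of_lt]
  have htail : fib (n + 1) ^ (a + 2) ∣ ∑ j ∈ Finset.range N, summand (j + 3) := by
    refine Finset.dvd_sum fun j _ => ?_
    have := pow_add_two_dvd_pow_mul_choose hN (Nat.le_add_left 3 j)
    exact (this.mul_right (fib n ^ (N - (j + 3)) * fib (j + 3))).trans (dvd_of_eq (by ring))
  have hsummand₀ : summand 0 = 0 := by simp [summand]
  have hsummand₁ : summand (0 + 1) = fib (n + 1) * fib n ^ (N - 1) * N := by simp [summand]
  have hsummand₂ : summand (0 + 1 + 1) = fib (n + 1) ^ 2 * fib n ^ (N - 2) * N.choose 2 := by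
    simp [summand]
  rw [hsum, Finset.sum_range_succ', Finset.sum_range_succ', Finset.sum_range_succ', hsummand₀,
    hsummand₁, hsummand₂, add_zero, add_assoc, add_comm (fib (n + 1) ^ 2 * _ * _)]
  simpa only [zero_add] using (Nat.modEq_zero_iff_dvd.mpr htail).add_right _

lemma odd_fib_of_even_fib_succ (h : Even (fib (n + 1))) : Odd (fib n) := by
  rw [← Nat.not_even_iff_odd]
  intro hn
  exact Nat.not_coprime_of_dvd_of_dvd one_lt_two hn.two_dvd h.two_dvd (Nat.fib_coprime_fib_succ n)

lemma fib_succ_mul_modEq_of_even (hF : Even (fib (n + 1))) (hN : fib (n + 1) ^ a ∣ N)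
    (hN₂ : Even N) :
    fib ((n + 1) * N) ≡ fib (n + 1) * N * (fib n ^ (N - 1) + fib (n + 1) / 2)
      [MOD fib (n + 1) ^ (a + 2)] := by
  rcases Nat.eq_zero_or_pos N with rfl | hpos
  · simp [Nat.ModEq.refl]
  refine (fib_succ_mul_modEq hN).trans ?_
  obtain ⟨t, ht⟩ : Odd (fib n ^ (N - 2) * (N - 1)) :=
    (odd_fib_of_even_fib_succ hF).pow.mul (Nat.Even.sub_odd hpos hN₂ odd_one)
  obtain ⟨M, hM⟩ := hN₂.two_dvd
  obtain ⟨h, hh⟩ := hF.two_dvd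
  have hchoose : N.choose 2 = M * (N - 1) := by
    rw [Nat.choose_two_right, hM, mul_assoc, Nat.mul_div_cancel_left _ two_pos]
  have hquad : fib (n + 1) ^ 2 * fib n ^ (N - 2) * N.choose 2 =
      fib (n + 1) * N * h + fib (n + 1) ^ 2 * N * t := calc
    _ = fib (n + 1) * (2 * h) * M * (fib n ^ (N - 2) * (N - 1)) := by
      rw [hchoose, ← hh]; ring
    _ = fib (n + 1) * (2 * M) * h + fib (n + 1) * (2 * h) * (2 * M) * t := by rw [ht]; ring
    _ = _ := by rw [← hh, ← hM]; ring
  have hdvd : fib (n + 1) ^ (a + 2) ∣ fib (n + 1) ^ 2 * N * t := by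
    rw [pow_add, mul_comm]
    exact (mul_dvd_mul_left _ hN).mul_right t
  have hhalf : fib (n + 1) / 2 = h := by omega
  rw [hquad, hhalf, ← add_assoc]
  convert (Nat.modEq_zero_iff_dvd.mpr hdvd).add_left _ using 1
  ring

lemma fib_sq_modEq (n : ℕ) : (fib n : ℤ) ^ 2 ≡ (-1) ^ (n + 1) [ZMOD fib (n + 1)] := by
  have hcassini := Int.fib_succ_mul_fib_pred_sub_fib_sq n
  rw [← Nat.cast_succ, Int.fib_natCast, Int.fib_natCast, Int.natAbs_natCast] at hcassini
  rw [Int.modEq_iff_dvd]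
  exact ⟨-Int.fib (n - 1), by rw [pow_succ]; linarith⟩

lemma fib_add_two_pow_add_half_modEq (hF : Even (fib (n + 3))) (hN : Even N) (hN₀ : N ≠ 0) :
    ((fib (n + 2) ^ (N - 1) + fib (n + 3) / 2 : ℕ) : ℤ) ≡
      ((-1) ^ (n + 3)) ^ (N / 2 - 1) * (fib n / 2 : ℕ) [ZMOD fib (n + 3)] := by
  have hexp : N - 1 = 2 * (N / 2 - 1) + 1 := by grind
  have hdouble : (fib (n + 3) : ℤ) = 2 * (fib (n + 3) / 2 : ℕ) := by grind
  have hsub : (fib (n + 2) : ℤ) - (fib (n + 3) / 2 : ℕ) = (fib n / 2 : ℕ) := by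
    have h2 : fib (n + 2) = fib n + fib (n + 1) := Nat.fib_add_two
    have h3 : fib (n + 3) = fib (n + 1) + fib (n + 2) := Nat.fib_add_two
    grind
  set h : ℤ := ((fib (n + 3) / 2 : ℕ) : ℤ)
  set s : ℤ := ((-1) ^ (n + 3)) ^ (N / 2 - 1) with hs
  have hpow : (fib (n + 2) : ℤ) ^ (N - 1) ≡ s * fib (n + 2) [ZMOD fib (n + 3)] := by
    rw [hexp, pow_succ, pow_mul]
    exact ((fib_sq_modEq (n + 2)).pow _).mul_right _
  have hhalf : h ≡ s * -h [ZMOD fib (n + 3)] := by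
    rw [hdouble, hs, ← pow_mul, mul_neg, neg_eq_neg_one_mul, ← mul_assoc, ← pow_succ']
    exact (neg_one_pow_mul_modEq_self h _).symm
  calc ((fib (n + 2) ^ (N - 1) + fib (n + 3) / 2 : ℕ) : ℤ)
      = (fib (n + 2) : ℤ) ^ (N - 1) + h := by push_cast; rfl
    _ ≡ s * fib (n + 2) + s * -h [ZMOD fib (n + 3)] := hpow.add hhalf
    _ = s * (fib n / 2 : ℕ) := by rw [← hsub]; ring

lemma fib_add_three_mul_modEq (hF : Even (fib (n + 3))) (hN : fib (n + 3) ^ a ∣ N)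
    (hN₂ : Even N) :
    (fib ((n + 3) * N) : ℤ) ≡
      fib (n + 3) * N * (((-1) ^ (n + 3)) ^ (N / 2 - 1) * (fib n / 2 : ℕ))
        [ZMOD fib (n + 3) ^ (a + 2)] := by
  rcases eq_or_ne N 0 with rfl | hN₀
  · simp [Int.ModEq.refl]
  have hfib := Int.natCast_modEq_iff.mpr (fib_succ_mul_modEq_of_even hF hN hN₂)
  have hdvd : (fib (n + 3) : ℤ) ^ (a + 2) ∣ fib (n + 3) * N * fib (n + 3) := by
    have := mul_dvd_mul_right hN (fib (n + 3) ^ 2)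
    rw [← pow_add] at this
    exact_mod_cast this.trans (dvd_of_eq (by ring))
  have hfactor := (fib_add_two_pow_add_half_modEq hF hN₂ hN₀).mul_left' (c := fib (n + 3) * N)
  refine Int.ModEq.trans ?_ (hfactor.of_dvd hdvd)
  exact_mod_cast hfib

lemma fib_add_three_mul_modEq_of_four_dvd (hF : Even (fib (n + 3))) (hN : fib (n + 3) ^ a ∣ N)
    (hN₄ : 4 ∣ N) :
    (fib ((n + 3) * N) : ℤ) ≡ fib (n + 3) * N * ((-1) ^ (n + 3) * (fib n / 2 : ℕ))
      [ZMOD fib (n + 3) ^ (a + 2)] := by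
  rcases eq_or_ne N 0 with rfl | hN₀
  · simp [Int.ModEq.refl]
  have hodd : Odd (N / 2 - 1) := by grind
  have hsign : ((-1 : ℤ) ^ (n + 3)) ^ (N / 2 - 1) = (-1) ^ (n + 3) := by
    rw [← pow_mul, mul_comm, pow_mul, hodd.neg_one_pow]
  have := fib_add_three_mul_modEq hF hN (even_iff_two_dvd.mpr (dvd_trans (by norm_num) hN₄))
  rwa [hsign] at this

lemma not_four_dvd_fib_of_odd (hn : Odd n) : ¬ 4 ∣ fib n := by
  intro h4
  obtain ⟨r, rfl⟩ : ∃ r, n = r + 1 := Nat.exists_eq_add_one_of_ne_zero hn.pos.ne'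
  have hsq : (fib r : ℤ) ^ 2 ≡ -1 [ZMOD 4] := by
    have := (fib_sq_modEq r).of_dvd (Int.natCast_dvd_natCast.mpr h4)
    rwa [hn.neg_one_pow] at this
  have hodd : Odd (fib r : ℤ) := by
    exact_mod_cast odd_fib_of_even_fib_succ (even_iff_two_dvd.mpr (dvd_trans (by norm_num) h4))
  have := Int.sq_mod_four_eq_one_of_odd hodd
  simp [Int.ModEq, this] at hsq

lemma fib_add_three_mul_fib_modEq (hF : Even (fib (n + 3))) :
    (fib ((n + 3) * fib (n + 3)) : ℤ) ≡ fib (n + 3) ^ 2 * (fib n / 2 : ℕ)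
      [ZMOD fib (n + 3) ^ 3] := by
  have hsign : ((-1 : ℤ) ^ (n + 3)) ^ (fib (n + 3) / 2 - 1) = 1 := by
    rcases Nat.even_or_odd (n + 3) with hn | hn
    · rw [hn.neg_one_pow, one_pow]
    · have := not_four_dvd_fib_of_odd hn
      have heven : Even (fib (n + 3) / 2 - 1) := by grind
      rw [hn.neg_one_pow, heven.neg_one_pow]
  have := fib_add_three_mul_modEq (a := 1) hF (by rw [pow_one]) hF
  rwa [hsign, one_mul, ← sq] at this

lemma even_fib_of_three_dvd (h : 3 ∣ n) : Even (fib n) :=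
  even_iff_two_dvd.mpr (Nat.fib_dvd 3 n h)

end FibMul

section Iteration

variable {n m k a x : ℕ} {c : ℤ}

lemma G_succ (n m : ℕ) (hk : k ≠ 0) : G n m (k + 1) = fib (n * G n m k) := by
  obtain ⟨j, rfl⟩ := Nat.exists_eq_succ_of_ne_zero hk
  rfl

lemma fib_add_three_mul_modEq_of_modEq_pow_mul (hF : Even (fib (n + 3))) (ha : 2 ≤ a)
    (hx : (x : ℤ) ≡ fib (n + 3) ^ a * c [ZMOD fib (n + 3) ^ (a + 1)]) :
    (fib ((n + 3) * x) : ℤ) ≡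
      fib (n + 3) ^ (a + 1) * (c * ((-1) ^ (n + 3) * (fib n / 2 : ℕ)))
        [ZMOD fib (n + 3) ^ (a + 2)] := by
  have hdvd : fib (n + 3) ^ a ∣ x := by
    have := ((hx.of_dvd (pow_dvd_pow _ a.le_succ)).dvd_iff).mpr (dvd_mul_right _ _)
    exact_mod_cast this
  have hfour : 4 ∣ x :=
    ((pow_dvd_pow_of_dvd hF.two_dvd 2).trans (pow_dvd_pow _ ha)).trans hdvd
  have hscaled := (hx.mul_left' (c := (fib (n + 3) : ℤ))).mul_right
    ((-1) ^ (n + 3) * (fib n / 2 : ℕ))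
  rw [← pow_succ'] at hscaled
  refine (fib_add_three_mul_modEq_of_four_dvd hF hdvd hfour).trans ?_
  convert hscaled using 1
  ring

lemma G_add_modEq (hF : Even (fib (n + 3))) (ha : 2 ≤ a) (hk : k ≠ 0)
    (h : (G (n + 3) m k : ℤ) ≡ fib (n + 3) ^ a * c [ZMOD fib (n + 3) ^ (a + 1)]) (i : ℕ) :
    (G (n + 3) m (k + i) : ℤ) ≡
      fib (n + 3) ^ (a + i) * (c * ((-1) ^ (n + 3) * (fib n / 2 : ℕ)) ^ i)
        [ZMOD fib (n + 3) ^ (a + i + 1)] := by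
  induction i with
  | zero => simpa using h
  | succ i ih =>
    rw [← add_assoc k, G_succ _ _ (by omega), pow_succ (_ * _), ← mul_assoc c]
    exact fib_add_three_mul_modEq_of_modEq_pow_mul (a := a + i) hF (by omega) ih

lemma G_modEq_of_two_le (hF : Even (fib (n + 3))) (hm : 2 ≤ m) (i : ℕ) :
    (G (n + 3) m (i + 1) : ℤ) ≡
      fib (n + 3) ^ (m + i) * ((-1) ^ ((n + 3) * i) * (fib n / 2 : ℕ) ^ i)
        [ZMOD fib (n + 3) ^ (m + i + 1)] := by
  have h₁ : (G (n + 3) m 1 : ℤ) ≡ fib (n + 3) ^ m * 1 [ZMOD fib (n + 3) ^ (m + 1)] := by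
    simp [G, Int.ModEq.refl]
  have := G_add_modEq hF hm one_ne_zero h₁ i
  rwa [one_mul, mul_pow, ← pow_mul, add_comm 1 i] at this

lemma G_one_modEq (hF : Even (fib (n + 3))) (i : ℕ) :
    (G (n + 3) 1 (i + 2) : ℤ) ≡
      fib (n + 3) ^ (i + 2) * ((-1) ^ ((n + 3) * i) * (fib n / 2 : ℕ) ^ (i + 1))
        [ZMOD fib (n + 3) ^ (i + 3)] := by
  have h₂ : (G (n + 3) 1 2 : ℤ) ≡ fib (n + 3) ^ 2 * (fib n / 2 : ℕ) [ZMOD fib (n + 3) ^ 3] := by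
    simpa [G] using fib_add_three_mul_fib_modEq hF
  have := G_add_modEq hF le_rfl two_ne_zero h₂ i
  rwa [mul_pow, ← pow_mul, mul_left_comm ((fib n / 2 : ℕ) : ℤ), ← pow_succ',
    add_comm 2 i] at this

end Iteration

theorem stmt_5_general (k n m : ℕ) (hk : 2 ≤ k) (hn : 0 < n) (hm : 1 ≤ m) (h3 : 3 ∣ n) :
    ((G n m k / fib n ^ (k + m - 1) : ℕ) : ℤ) ≡
      (-1) ^ (n * if m = 1 then k else k - 1) * ((fib (n - 3) / 2 : ℕ) : ℤ) ^ (k - 1)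
        [ZMOD fib n] := by
  obtain ⟨r, rfl⟩ := Nat.exists_eq_add_of_le' (Nat.le_of_dvd hn h3)
  obtain ⟨i, rfl⟩ := Nat.exists_eq_add_of_le' hk
  have hF := even_fib_of_three_dvd h3
  have hF₀ : fib (r + 3) ≠ 0 := (Nat.fib_pos.mpr hn).ne'
  refine natCast_div_modEq_of_modEq_mul (pow_ne_zero _ hF₀) ?_
  rw [Nat.cast_pow, ← pow_succ]
  rcases hm.eq_or_lt with rfl | hm₂
  · have hsign : (-1 : ℤ) ^ ((r + 3) * (i + 2)) = (-1) ^ ((r + 3) * i) := by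
      rw [mul_add, pow_add, (even_two.mul_left (r + 3)).neg_one_pow, mul_one]
    simpa [hsign] using G_one_modEq hF i
  · have := G_modEq_of_two_le hF hm₂ (i + 1)
    rw [show m + (i + 1) = i + 2 + m - 1 by omega] at this
    simpa [hm₂.ne'] using this

theorem stmt_5 (k n m : ℕ) (hk : 2 ≤ k) (hn : 3 ≤ n) (hm : 1 ≤ m)
    (h3 : 3 ∣ n) (h : (Even k ∧ 2 ≤ m) ∨ (Odd k ∧ m = 1)) :
    ((G n m k / Nat.fib n ^ (k + m - 1) : ℕ) : ℤ) ≡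
      (-1) ^ n * ((Nat.fib (n - 3) / 2 : ℕ) : ℤ) ^ (k - 1) [ZMOD (Nat.fib n : ℤ)] := by
  have hodd : Odd (if m = 1 then k else k - 1) := by grind
  have := stmt_5_general k n m hk (by omega) hm h3
  rwa [mul_comm n, pow_mul, hodd.neg_one_pow] at this
end

section
/- Let a, j ≥ 1 and s ≥ 2 be positive integers, and let c be the smallest nonnegative integer such that j divides a·s^c (assuming such c exists, e.g. if j ∣ a·s^N for some N). Then there exists a prime p such that p divides s and p^c divides j. -/
/-!
If `j ∤ a * s ^ k`, then some prime power `p ^ n` dividing `j` does not divide `a * s ^ k`. When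
`j ∣ a * s ^ (k + 1)`, multiplying by one more `s` repairs the failure at `p`, so `p ∣ s`. But then
`p ^ k ∣ a * s ^ k`, which forces `n ≥ k + 1`.
-/

section UniqueFactorization

variable {R : Type*} [CommMonoidWithZero R] [UniqueFactorizationMonoid R] {a b j s : R}

theorem exists_prime_pow_dvd_and_not_dvd (ha : a ≠ 0) (hab : ¬a ∣ b) :
    ∃ (p : R) (n : ℕ), Prime p ∧ p ^ n ∣ a ∧ ¬p ^ n ∣ b := by
  simpa only [UniqueFactorizationMonoid.dvd_iff_emultiplicity_le ha,
    emultiplicity_le_emultiplicity_iff, not_forall, exists_prop, exists_and_left] using hab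

theorem exists_prime_dvd_and_pow_succ_dvd {k : ℕ} (hj : j ≠ 0)
    (hdvd : j ∣ a * s ^ (k + 1)) (hndvd : ¬j ∣ a * s ^ k) :
    ∃ p : R, Prime p ∧ p ∣ s ∧ p ^ (k + 1) ∣ j := by
  obtain ⟨p, n, hp, hpj, hpn⟩ := exists_prime_pow_dvd_and_not_dvd hj hndvd
  have hps : p ∣ s := by
    by_contra hps
    rw [pow_succ, ← mul_assoc] at hdvd
    exact hpn (hp.pow_dvd_of_dvd_mul_right n hps (hpj.trans hdvd))
  have hkn : k < n := by
    by_contra! hnk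
    exact hpn ((pow_dvd_pow p hnk).trans ((pow_dvd_pow_of_dvd hps k).mul_left a))
  exact ⟨p, hp, hps, (pow_dvd_pow p hkn).trans hpj⟩

theorem stmt_11_general {c : ℕ} (hs₀ : s ≠ 0) (hs : ¬IsUnit s)
    (hc : j ∣ a * s ^ c) (hmin : ∀ c' < c, ¬j ∣ a * s ^ c') :
    ∃ p : R, Prime p ∧ p ∣ s ∧ p ^ c ∣ j := by
  cases c with
  | zero =>
    obtain ⟨p, hp, hps⟩ := WfDvdMonoid.exists_irreducible_factor hs hs₀
    exact ⟨p, hp.prime, hps, by rw [pow_zero]; exact one_dvd j⟩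
  | succ k =>
    have hk : ¬j ∣ a * s ^ k := hmin k k.lt_succ_self
    have hj : j ≠ 0 := by
      rintro rfl
      rw [zero_dvd_iff] at hc hk
      rw [pow_succ, ← mul_assoc] at hc
      exact mul_ne_zero hk hs₀ hc
    exact exists_prime_dvd_and_pow_succ_dvd hj hc hk

end UniqueFactorization

theorem stmt_11 (a j s : ℕ) (c : ℕ) (ha : 1 ≤ a) (hj : 1 ≤ j) (hs : 2 ≤ s)
    (hc : j ∣ a * s ^ c) (hmin : ∀ c' < c, ¬ (j ∣ a * s ^ c')) :
    ∃ p : ℕ, p.Prime ∧ p ∣ s ∧ p ^ c ∣ j := by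
  simp only [Nat.prime_iff]
  exact stmt_11_general (by lia) (by rw [Nat.isUnit_iff]; lia) hc hmin
end

section
/- Let k, ℓ, r, s be positive integers with s^k ∣ r. Then for every j with 1 ≤ j ≤ r satisfying 2^{j-ℓ+1} > j, we have s^{k+ℓ} ∣ binom(r, j)·s^j. -/
/-!
Since `r ∣ j * r.choose j`, the only part of `s ^ k` that can be missing from `r.choose j` is
`g = gcd (s ^ k) j`. Put `d = j - l`; the hypothesis says `j < 2 ^ (d + 1)`, so `g` has at most `d`
prime factors, counted with multiplicity. They all divide `s`, so `g ∣ s ^ d`, and the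
remaining `s ^ l` of `s ^ j = s ^ d * s ^ l` raises the exponent from `k` to `k + l`.
-/

theorem dvd_mul_choose_s12 : ∀ n k : ℕ, n ∣ k * n.choose k
  | _, 0 => by simp
  | 0, k + 1 => by simp
  | n + 1, k + 1 => ⟨n.choose k, by rw [Nat.add_one_mul_choose_eq, mul_comm]⟩

theorem dvd_pow_of_lt_two_pow {a s d : ℕ} (ha : a ≠ 0) (had : a < 2 ^ (d + 1))
    (hprime : ∀ p, p.Prime → p ∣ a → p ∣ s) : a ∣ s ^ d := by
  refine (Nat.dvd_iff_prime_pow_dvd_dvd _ _).2 fun p i hp hpi ↦ ?_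
  rcases eq_or_ne i 0 with rfl | hi
  · simp
  have hps : p ∣ s := hprime p hp ((dvd_pow_self p hi).trans hpi)
  have htwo_pow : 2 ^ i < 2 ^ (d + 1) :=
    calc 2 ^ i ≤ p ^ i := Nat.pow_le_pow_left hp.two_le i
      _ ≤ a := Nat.le_of_dvd (Nat.pos_of_ne_zero ha) hpi
      _ < 2 ^ (d + 1) := had
  have hid : i ≤ d := Nat.lt_succ_iff.1 ((Nat.pow_lt_pow_iff_right one_lt_two).1 htwo_pow)
  exact (pow_dvd_pow_of_dvd hps i).trans (pow_dvd_pow s hid)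

theorem dvd_choose_mul_pow {m r s j d : ℕ} (hmr : m ∣ r) (hprime : ∀ p, p.Prime → p ∣ m → p ∣ s)
    (hj : j ≠ 0) (hjd : j < 2 ^ (d + 1)) : m ∣ r.choose j * s ^ d := by
  have hchoose : m ∣ m.gcd j * r.choose j :=
    Nat.dvd_gcd_mul_iff_dvd_mul.2 (hmr.trans (dvd_mul_choose_s12 r j))
  have hgcd : m.gcd j ∣ s ^ d :=
    dvd_pow_of_lt_two_pow (Nat.gcd_ne_zero_right hj)
      ((Nat.gcd_le_right m (Nat.pos_of_ne_zero hj)).trans_lt hjd)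
      fun p hp hpg ↦ hprime p hp (hpg.trans (Nat.gcd_dvd_left m j))
  rw [mul_comm]
  exact hchoose.trans (mul_dvd_mul_right hgcd _)

theorem stmt_12 (k l r s : ℕ) (hk : 1 ≤ k) (hl : 1 ≤ l) (hr : 1 ≤ r) (hs : 1 ≤ s)
    (hdvd : s ^ k ∣ r) (j : ℕ) (hj1 : 1 ≤ j) (hjr : j ≤ r)
    (hpow : 2 ^ (j + 1) > j * 2 ^ l) :
    s ^ (k + l) ∣ r.choose j * s ^ j := by
  have hlj : l ≤ j := Nat.lt_succ_iff.1 <|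
    (Nat.pow_lt_pow_iff_right one_lt_two).1 ((Nat.le_mul_of_pos_left _ hj1).trans_lt hpow)
  obtain ⟨d, rfl⟩ := Nat.exists_eq_add_of_le' hlj
  have hjd : d + l < 2 ^ (d + 1) := by
    rw [add_right_comm, pow_add] at hpow
    exact lt_of_mul_lt_mul_right hpow (Nat.zero_le _)
  have hdvd_choose : s ^ k ∣ r.choose (d + l) * s ^ d :=
    dvd_choose_mul_pow hdvd (fun _ hp ↦ hp.dvd_of_dvd_pow) (Nat.ne_of_gt hj1) hjd
  rw [pow_add, pow_add, ← mul_assoc]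
  exact mul_dvd_mul_right hdvd_choose _
end

section
/- Let m, n ≥ 1 and k ≥ 2 be integers and set r = G(k,n,m). If n is odd and 3 ∤ n, then r ≡ 1 (mod 4). -/
/-!
The invariant is coprimality to `6 = F_3 * F_4`: since `gcd (F_a, F_b) = F_(gcd (a, b))`, it passes
from `n` to `F_n`, hence to every term of the sequence. The congruence modulo 4 comes from
`F_(2j+1) = F_(j+1)^2 + F_j^2`, because an odd sum of two squares is 1 modulo 4.
-/

theorem coprime_six_iff {n : ℕ} : n.Coprime 6 ↔ Odd n ∧ ¬ 3 ∣ n := by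
  rw [show 6 = 2 * 3 from rfl, Nat.coprime_mul_iff_right, Nat.coprime_two_right,
    Nat.coprime_comm (m := 3), Nat.prime_three.coprime_iff_not_dvd]

theorem coprime_fib_fib {a b : ℕ} (h : a.Coprime b) : (Nat.fib a).Coprime (Nat.fib b) := by
  rw [Nat.Coprime, ← Nat.fib_gcd, h.gcd_eq_one, Nat.fib_one]

theorem coprime_fib_six {n : ℕ} (h : n.Coprime 6) : (Nat.fib n).Coprime 6 := by
  have hn_three : n.Coprime 3 := h.coprime_dvd_right (by norm_num)
  have hn_four : n.Coprime 4 := (h.coprime_dvd_right (by norm_num) : n.Coprime 2).pow_right 2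
  have hfib_two : (Nat.fib n).Coprime 2 := coprime_fib_fib hn_three
  have hfib_three : (Nat.fib n).Coprime 3 := coprime_fib_fib hn_four
  exact hfib_two.mul_right hfib_three

theorem sq_mod_four (a : ℕ) : a ^ 2 % 4 = 0 ∨ a ^ 2 % 4 = 1 := by
  have : a % 4 < 4 := Nat.mod_lt a (by norm_num)
  interval_cases ha : a % 4 <;> simp [Nat.pow_mod, ha]

theorem sq_add_sq_modEq_one_of_odd {a b : ℕ} (h : Odd (a ^ 2 + b ^ 2)) :
    a ^ 2 + b ^ 2 ≡ 1 [MOD 4] := by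
  have ha := sq_mod_four a
  have hb := sq_mod_four b
  rw [Nat.odd_iff] at h
  rw [Nat.ModEq]
  lia

theorem fib_modEq_one_of_odd {n : ℕ} (hn : Odd n) (hfib : Odd (Nat.fib n)) :
    Nat.fib n ≡ 1 [MOD 4] := by
  obtain ⟨j, rfl⟩ := hn
  rw [Nat.fib_two_mul_add_one] at hfib ⊢
  exact sq_add_sq_modEq_one_of_odd hfib

theorem coprime_G_six {n : ℕ} (m : ℕ) (hn : n.Coprime 6) : ∀ k, (G n m k).Coprime 6
  | 0 => Nat.coprime_one_left 6
  | 1 => (coprime_fib_six hn).pow_left m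
  | k + 2 => coprime_fib_six (hn.mul_left (coprime_G_six m hn (k + 1)))

theorem stmt_15 (m n k : ℕ) (hm : 1 ≤ m) (hn : 1 ≤ n) (hk : 2 ≤ k)
    (hodd : Odd n) (h3 : ¬ (3 ∣ n)) :
    G n m k ≡ 1 [MOD 4] := by
  have hn_six : n.Coprime 6 := coprime_six_iff.mpr ⟨hodd, h3⟩
  obtain ⟨k, rfl⟩ := Nat.exists_eq_add_of_le' hk
  have hG_odd (j : ℕ) : Odd (G n m j) := (coprime_six_iff.mp (coprime_G_six m hn_six j)).1
  exact fib_modEq_one_of_odd (hodd.mul (hG_odd (k + 1))) (hG_odd (k + 2))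
end

section
/- Let m, n ≥ 1 and k ≥ 2 be integers and set r = G(k,n,m). If 3 ∣ n, then r ≡ 0 (mod 8). -/
section

variable {d n m : ℕ}

theorem fib_dvd_G_add_one (hd : d ∣ n) (hm : m ≠ 0) (k : ℕ) :
    Nat.fib d ∣ G n m (k + 1) := by
  cases k with
  | zero => exact dvd_pow (Nat.fib_dvd d n hd) hm
  | succ k => exact Nat.fib_dvd d _ (hd.mul_right (G n m (k + 1)))

theorem fib_mul_fib_dvd_G_add_two (hd : d ∣ n) (hm : m ≠ 0) (k : ℕ) :
    Nat.fib (d * Nat.fib d) ∣ G n m (k + 2) :=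
  Nat.fib_dvd _ _ (mul_dvd_mul hd (fib_dvd_G_add_one hd hm k))

end

theorem stmt_16 (m n k : ℕ) (hm : 1 ≤ m) (hn : 1 ≤ n) (hk : 2 ≤ k)
    (h3 : 3 ∣ n) :
    G n m k ≡ 0 [MOD 8] := by
  obtain ⟨j, rfl⟩ := Nat.exists_eq_add_of_le' hk
  rw [Nat.modEq_zero_iff_dvd]
  calc
    8 = Nat.fib (3 * Nat.fib 3) := by norm_num
    _ ∣ G n m (j + 2) := fib_mul_fib_dvd_G_add_two h3 (Nat.one_le_iff_ne_zero.mp hm) j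
end

section
/- For all positive integers n and r, F_{n·r} = Σ_{j=1}^{r} binom(r, j) · F_n^j · F_{n-1}^{r-j} · F_j. -/
/-!
The matrix `Q = !![1, 1; 1, 0]` satisfies `Q ^ 2 = Q + 1`, which forces
`Q ^ n = F_n Q + F_{n-1}`. Raising this to the `r`-th power expands `Q ^ (n r)` binomially in the
powers of `Q`, and `F_k` is the upper right entry of `Q ^ k`.
-/

section

variable {R : Type*} [Semiring R] {x : R}

lemma pow_succ_eq_fib_smul_add (hx : x ^ 2 = x + 1) (m : ℕ) :
    x ^ (m + 1) = Nat.fib (m + 1) • x + Nat.fib m • 1 := by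
  induction m with
  | zero => simp
  | succ m ih =>
    calc x ^ (m + 2)
        = Nat.fib (m + 1) • x ^ 2 + Nat.fib m • x := by
          rw [pow_succ, ih, add_mul, smul_mul_assoc, smul_mul_assoc, one_mul, sq]
      _ = (Nat.fib m + Nat.fib (m + 1)) • x + Nat.fib (m + 1) • 1 := by
          rw [hx, smul_add, add_smul]
          abel
      _ = Nat.fib (m + 2) • x + Nat.fib (m + 1) • 1 := by
          rw [Nat.fib_add_two]

lemma pow_succ_mul_eq_sum_choose_smul_pow (hx : x ^ 2 = x + 1) (m r : ℕ) :
    x ^ ((m + 1) * r) = ∑ j ∈ Finset.range (r + 1),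
      (r.choose j * Nat.fib (m + 1) ^ j * Nat.fib m ^ (r - j)) • x ^ j := by
  have terms_commute : Commute (Nat.fib (m + 1) • x) (Nat.fib m • 1) :=
    (Commute.one_right _).smul_right _
  rw [pow_mul, pow_succ_eq_fib_smul_add hx, terms_commute.add_pow]
  refine Finset.sum_congr rfl fun j _ ↦ ?_
  rw [smul_pow, smul_pow, one_pow, smul_mul_smul_comm, mul_one, ← nsmul_eq_mul', smul_smul,
    mul_assoc]

end

/-- The Fibonacci `Q`-matrix, whose powers have Fibonacci numbers as entries. It is taken over `ℕ`,
so that identities between them hold without casts. -/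
def fibMatrix : Matrix (Fin 2) (Fin 2) ℕ := !![1, 1; 1, 0]

lemma fibMatrix_sq : fibMatrix ^ 2 = fibMatrix + 1 := by
  decide

lemma fibMatrix_pow_apply_zero_one (n : ℕ) : (fibMatrix ^ n) 0 1 = Nat.fib n := by
  cases n with
  | zero => simp
  | succ m =>
    rw [pow_succ_eq_fib_smul_add fibMatrix_sq, Matrix.add_apply, Matrix.smul_apply,
      Matrix.smul_apply]
    simp [fibMatrix]

lemma fib_succ_mul_add_eq_sum_choose (m r k : ℕ) :
    Nat.fib ((m + 1) * r + k) = ∑ j ∈ Finset.range (r + 1),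
      r.choose j * Nat.fib (m + 1) ^ j * Nat.fib m ^ (r - j) * Nat.fib (j + k) := by
  calc Nat.fib ((m + 1) * r + k)
      = (fibMatrix ^ ((m + 1) * r) * fibMatrix ^ k) 0 1 := by
        rw [← pow_add, fibMatrix_pow_apply_zero_one]
    _ = (∑ j ∈ Finset.range (r + 1),
          (r.choose j * Nat.fib (m + 1) ^ j * Nat.fib m ^ (r - j)) • fibMatrix ^ (j + k)) 0 1 := by
        simp only [pow_succ_mul_eq_sum_choose_smul_pow fibMatrix_sq, Finset.sum_mul,
          smul_mul_assoc, pow_add]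
    _ = ∑ j ∈ Finset.range (r + 1),
          r.choose j * Nat.fib (m + 1) ^ j * Nat.fib m ^ (r - j) * Nat.fib (j + k) := by
        simp only [Matrix.sum_apply, Matrix.smul_apply, fibMatrix_pow_apply_zero_one, smul_eq_mul]

theorem stmt_17 (n r : ℕ) (hn : 1 ≤ n) (hr : 1 ≤ r) :
    Nat.fib (n * r) =
      ∑ j ∈ Finset.Icc 1 r,
        r.choose j * Nat.fib n ^ j * Nat.fib (n - 1) ^ (r - j) * Nat.fib j := by
  obtain ⟨m, rfl⟩ := Nat.exists_eq_add_of_le' hn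
  have expansion := fib_succ_mul_add_eq_sum_choose m r 0
  rw [Finset.range_eq_Ico, Finset.sum_eq_sum_Ico_succ_bot r.succ_pos] at expansion
  simpa [Finset.Ico_add_one_right_eq_Icc] using expansion
end

section
/- Let n ≥ 4 be an integer with 3 ∣ n, and let k ≥ 2 be an integer. Then F_n does not divide (F_{n-3}/2)^{k-1}. (Since 3 ∣ n implies F_{n-3} is even, F_{n-3}/2 is an integer.) -/
/-!
The cofactors of `gcd a b` in `a` and `b` are coprime, so `a` can divide a power of `b / gcd a b`
only if `a / gcd a b = 1`, that is, if `a ∣ b`. For `a = F_n` and `b = F_m` the gcd is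
`F_(gcd n m)`, and `F_n ∣ F_m` fails because `0 < F_m < F_n`. The theorem is the case `m = n - 3`,
where `F_(gcd n m) = F_3 = 2`.
-/

theorem dvd_of_dvd_div_gcd_pow {a b j : ℕ} (h : a ∣ (b / a.gcd b) ^ j) : a ∣ b := by
  rcases (a.gcd b).eq_zero_or_pos with hgcd | hgcd
  · rw [Nat.eq_zero_of_gcd_eq_zero_right hgcd]
    exact dvd_zero a
  · have hcoprime : (a / a.gcd b).Coprime ((b / a.gcd b) ^ j) :=
      (Nat.coprime_div_gcd_div_gcd hgcd).pow_right j
    have hdvd : a / a.gcd b ∣ (b / a.gcd b) ^ j :=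
      (Nat.div_dvd_of_dvd (Nat.gcd_dvd_left a b)).trans h
    have hgcd_eq : a.gcd b = a :=
      Nat.eq_of_dvd_of_div_eq_one (Nat.gcd_dvd_left a b) (hcoprime.eq_one_of_dvd hdvd)
    exact Nat.gcd_eq_left_iff_dvd.mp hgcd_eq

theorem fib_lt_fib_of_lt {m n : ℕ} (hn : 2 < n) (hmn : m < n) : Nat.fib m < Nat.fib n :=
  calc
    Nat.fib m ≤ Nat.fib (n - 1) := Nat.fib_mono (by lia)
    _ < Nat.fib n := (Nat.fib_lt_fib (by lia)).mpr (by lia)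

theorem stmt_18_general {m n : ℕ} (hm : 0 < m) (hmn : m < n) (hn : 2 < n) (j : ℕ) :
    ¬ Nat.fib n ∣ (Nat.fib m / Nat.fib (n.gcd m)) ^ j := by
  rw [Nat.fib_gcd]
  intro h
  exact Nat.not_dvd_of_pos_of_lt (Nat.fib_pos.mpr hm) (fib_lt_fib_of_lt hn hmn)
    (dvd_of_dvd_div_gcd_pow h)

theorem stmt_18 (n k : ℕ) (hn : 4 ≤ n) (h3 : 3 ∣ n) (hk : 2 ≤ k) :
    ¬ (Nat.fib n ∣ (Nat.fib (n - 3) / 2) ^ (k - 1)) := by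
  have hgcd : n.gcd (n - 3) = 3 := by
    rw [Nat.gcd_self_sub_right (by lia), Nat.gcd_eq_right h3]
  have hnot := stmt_18_general (m := n - 3) (n := n) (by lia) (by lia) (by lia) (k - 1)
  rwa [hgcd] at hnot
end
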